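/- Let 0 < a < b < π and let p : [a,b] → ℝ be continuously differentiable with p(x) ≠ 0 for all x ∈ [a,b]. Let λ₀, λ₁ ∈ ℝ and let φ₀, φ₁ be Dirichlet eigenfunctions of 𝔏 for λ₀ and λ₁ respectively. If (pφ₀)' = 0 on (a,b) and (pφ₁)' = 0 on (a,b), then λ₀ = λ₁. -/

import Mathlib

/-- The Sturm–Liouville operator `𝔏 u = -(γ u')' + γ₀ u`. -/
noncomputable def SL (γ γ₀ u : ℝ → ℝ) : ℝ → ℝ :=
  fun x => -(deriv (fun y => γ y * deriv u y) x) + γ₀ x * u x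

/-- A Dirichlet eigenfunction of `𝔏` for the eigenvalue `lam`:
a nonzero C² function `φ` with `𝔏 φ = lam φ` on `[0, π]` and `φ 0 = φ π = 0`. -/
def IsDirichletEF (γ γ₀ : ℝ → ℝ) (lam : ℝ) (φ : ℝ → ℝ) : Prop :=
  ContDiff ℝ 2 φ ∧ (∃ x ∈ Set.Icc (0:ℝ) Real.pi, φ x ≠ 0) ∧
  (∀ x ∈ Set.Icc (0:ℝ) Real.pi, SL γ γ₀ φ x = lam * φ x) ∧
  φ 0 = 0 ∧ φ Real.pi = 0

/-!
The functions `p * φ₀` and `p * φ₁` are constants `c₀` and `c₁` on `(a, b)`. If one of them were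
zero, that eigenfunction would vanish on a nonempty open set, so its Cauchy data `(φ, γ φ')` would
vanish at a point, and uniqueness for linear first-order systems would make it vanish identically.
Hence `φ₁ = (c₁ / c₀) * φ₀` with `φ₁ ≠ 0` on `(a, b)`, and applying the linear operator `𝔏` to this
identity gives `lam₁ * φ₁ = lam₀ * φ₁`.
-/

open Set Filter Topology
open scoped NNReal

section LinearODE

variable {E : Type*} [NormedAddCommGroup E] [NormedSpace ℝ E]

theorem exists_lipschitzOnWith_clm_of_isCompact {F : Type*} [NormedAddCommGroup F]
    [NormedSpace ℝ F] {X : Type*} [TopologicalSpace X] {k : Set X} (hk : IsCompact k)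
    {A : X → E →L[ℝ] F} (hA : ContinuousOn A k) :
    ∃ K : ℝ≥0, ∀ t ∈ k, LipschitzOnWith K (A t) univ := by
  obtain ⟨C, hC⟩ := hk.exists_bound_of_continuousOn hA
  refine ⟨C.toNNReal, fun t ht => LipschitzWith.lipschitzOnWith ?_⟩
  exact (A t).lipschitz.weaken (NNReal.le_toNNReal_of_coe_le (hC t ht))

theorem eqOn_zero_of_hasDerivWithinAt_clm_apply {s : Set ℝ} [s.OrdConnected]
    {A : ℝ → E →L[ℝ] E} (hA : ContinuousOn A s) {z : ℝ → E}
    (hz : ∀ t ∈ s, HasDerivWithinAt z (A t (z t)) s t) {m : ℝ} (hm : m ∈ s) (hzm : z m = 0) :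
    EqOn z 0 s := by
  intro x hx
  have hsub : uIcc m x ⊆ s := OrdConnected.uIcc_subset ‹_› hm hx
  obtain ⟨K, hK⟩ := exists_lipschitzOnWith_clm_of_isCompact isCompact_uIcc (hA.mono hsub)
  have hz' : ∀ t ∈ uIcc m x, HasDerivWithinAt z (A t (z t)) (uIcc m x) t :=
    fun t ht => (hz t (hsub ht)).mono hsub
  have hzero : ∀ (r : Set ℝ) (t : ℝ),
      HasDerivWithinAt (0 : ℝ → E) (A t ((0 : ℝ → E) t)) r t := fun r t => by
    rw [Pi.zero_apply, map_zero]
    exact hasDerivWithinAt_const t r 0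
  have hzc : ContinuousOn z (uIcc m x) := fun t ht => (hz' t ht).continuousWithinAt
  rcases le_total m x with hmx | hxm
  · rw [uIcc_of_le hmx] at hK hz' hzc
    refine ODE_solution_unique_of_mem_Icc_right (v := fun t => A t) (s := fun _ => univ)
      (fun t ht => hK t (Ico_subset_Icc_self ht)) hzc (fun t ht => ?_) (fun _ _ => mem_univ _)
      continuousOn_const (fun t _ => hzero _ t) (fun _ _ => mem_univ _) hzm (right_mem_Icc.2 hmx)
    exact (hz' t (Ico_subset_Icc_self ht)).mono_of_mem_nhdsWithin (Icc_mem_nhdsGE_of_mem ht)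
  · rw [uIcc_of_ge hxm] at hK hz' hzc
    refine ODE_solution_unique_of_mem_Icc_left (v := fun t => A t) (s := fun _ => univ)
      (fun t ht => hK t (Ioc_subset_Icc_self ht)) hzc (fun t ht => ?_) (fun _ _ => mem_univ _)
      continuousOn_const (fun t _ => hzero _ t) (fun _ _ => mem_univ _) hzm (left_mem_Icc.2 hxm)
    exact (hz' t (Ioc_subset_Icc_self ht)).mono_of_mem_nhdsWithin (Icc_mem_nhdsLE_of_mem ht)

end LinearODE

section SturmLiouville

/-- Classical solutions of `𝔏 u = lam * u` on `s`, without boundary conditions: both `u` and its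
flux `γ u'` are differentiable, so the derivatives in `SL` are never junk values. -/
structure IsSLSolutionOn (γ γ₀ : ℝ → ℝ) (lam : ℝ) (u : ℝ → ℝ) (s : Set ℝ) : Prop where
  differentiableAt : ∀ x ∈ s, DifferentiableAt ℝ u x
  differentiableAt_flux : ∀ x ∈ s, DifferentiableAt ℝ (fun y => γ y * deriv u y) x
  SL_eq : ∀ x ∈ s, SL γ γ₀ u x = lam * u x

/-- The coefficient matrix `!![0, γ⁻¹; γ₀ - lam, 0]` of the first-order system satisfied by the
Cauchy data `(u, γ u')` of a solution of `𝔏 u = lam * u`. -/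
noncomputable def slSystem (γ γ₀ : ℝ → ℝ) (lam t : ℝ) : ℝ × ℝ →L[ℝ] ℝ × ℝ :=
  (γ t)⁻¹ • (ContinuousLinearMap.inl ℝ ℝ ℝ ∘L ContinuousLinearMap.snd ℝ ℝ ℝ) +
    (γ₀ t - lam) • (ContinuousLinearMap.inr ℝ ℝ ℝ ∘L ContinuousLinearMap.fst ℝ ℝ ℝ)

variable {γ γ₀ u u₀ u₁ : ℝ → ℝ} {lam lam₀ lam₁ : ℝ} {s : Set ℝ}

theorem slSystem_apply (t : ℝ) (z : ℝ × ℝ) :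
    slSystem γ γ₀ lam t z = ((γ t)⁻¹ * z.2, (γ₀ t - lam) * z.1) := by
  simp [slSystem]

theorem continuousOn_slSystem (hγ : ContinuousOn γ s) (hγne : ∀ x ∈ s, γ x ≠ 0)
    (hγ₀ : ContinuousOn γ₀ s) : ContinuousOn (slSystem γ γ₀ lam) s :=
  ((hγ.inv₀ hγne).smul continuousOn_const).add
    ((hγ₀.sub continuousOn_const).smul continuousOn_const)

theorem SL_congr_of_eventuallyEq {x : ℝ} (h : u₁ =ᶠ[𝓝 x] u₀) :
    SL γ γ₀ u₁ x = SL γ γ₀ u₀ x := by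
  have hflux : (fun y => γ y * deriv u₁ y) =ᶠ[𝓝 x] fun y => γ y * deriv u₀ y :=
    EventuallyEq.rfl.mul h.deriv
  simp only [SL, hflux.deriv_eq, h.eq_of_nhds]

theorem SL_const_mul (c x : ℝ) : SL γ γ₀ (fun y => c * u y) x = c * SL γ γ₀ u x := by
  simp only [SL, deriv_const_mul_field, mul_left_comm (γ _) c]
  ring

theorem eigenvalue_eq_of_eventuallyEq_const_mul {c x : ℝ}
    (h : u₁ =ᶠ[𝓝 x] fun y => c * u₀ y) (hne : u₁ x ≠ 0)
    (h₀ : SL γ γ₀ u₀ x = lam₀ * u₀ x) (h₁ : SL γ γ₀ u₁ x = lam₁ * u₁ x) : lam₀ = lam₁ := by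
  refine mul_right_cancel₀ hne ?_
  calc lam₀ * u₁ x = c * (lam₀ * u₀ x) := by rw [h.eq_of_nhds]; ring
    _ = SL γ γ₀ u₁ x := by rw [← h₀, SL_congr_of_eventuallyEq h, SL_const_mul]
    _ = lam₁ * u₁ x := h₁

theorem IsDirichletEF.isSLSolutionOn (hu : IsDirichletEF γ γ₀ lam u) (hγ : Differentiable ℝ γ) :
    IsSLSolutionOn γ γ₀ lam u (Icc 0 Real.pi) where
  differentiableAt x _ := hu.1.differentiable two_ne_zero x
  differentiableAt_flux x _ := (hγ x).mul (hu.1.differentiable_deriv_two x)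
  SL_eq := hu.2.2.1

namespace IsSLSolutionOn

theorem hasDerivAt_cauchyData (hu : IsSLSolutionOn γ γ₀ lam u s) {x : ℝ} (hx : x ∈ s)
    (hγx : γ x ≠ 0) :
    HasDerivAt (fun y => (u y, γ y * deriv u y))
      (slSystem γ γ₀ lam x (u x, γ x * deriv u x)) x := by
  have hflux : deriv (fun y => γ y * deriv u y) x = (γ₀ x - lam) * u x := by
    have hL := hu.SL_eq x hx
    rw [SL] at hL
    linarith
  rw [slSystem_apply, inv_mul_cancel_left₀ hγx, ← hflux]
  exact (hu.differentiableAt x hx).hasDerivAt.prodMk (hu.differentiableAt_flux x hx).hasDerivAt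

theorem eqOn_zero_of_cauchyData_eq_zero [s.OrdConnected] (hu : IsSLSolutionOn γ γ₀ lam u s)
    (hγ : ContinuousOn γ s) (hγne : ∀ x ∈ s, γ x ≠ 0) (hγ₀ : ContinuousOn γ₀ s)
    {m : ℝ} (hm : m ∈ s) (hum : u m = 0) (hum' : deriv u m = 0) : EqOn u 0 s := fun x hx =>
  congrArg Prod.fst <| eqOn_zero_of_hasDerivWithinAt_clm_apply
    (continuousOn_slSystem hγ hγne hγ₀)
    (fun t ht => (hu.hasDerivAt_cauchyData ht (hγne t ht)).hasDerivWithinAt) hm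
    (by simp [hum, hum']) hx

theorem eqOn_zero_of_eventuallyEq_zero [s.OrdConnected] (hu : IsSLSolutionOn γ γ₀ lam u s)
    (hγ : ContinuousOn γ s) (hγne : ∀ x ∈ s, γ x ≠ 0) (hγ₀ : ContinuousOn γ₀ s)
    {m : ℝ} (hm : m ∈ s) (hum : u =ᶠ[𝓝 m] 0) : EqOn u 0 s :=
  hu.eqOn_zero_of_cauchyData_eq_zero hγ hγne hγ₀ hm hum.eq_of_nhds (by simp [hum.deriv_eq])

theorem exists_ne_zero_mul_eq_const [s.OrdConnected] (hu : IsSLSolutionOn γ γ₀ lam u s)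
    (hγ : ContinuousOn γ s) (hγne : ∀ x ∈ s, γ x ≠ 0) (hγ₀ : ContinuousOn γ₀ s)
    (hune : ∃ x ∈ s, u x ≠ 0) {t : Set ℝ} (ht : IsOpen t) (htc : IsPreconnected t) (hts : t ⊆ s)
    {p : ℝ → ℝ} (hp : DifferentiableOn ℝ p t) (hpne : ∃ x ∈ t, p x ≠ 0)
    (hpu : ∀ x ∈ t, deriv (fun y => p y * u y) x = 0) : ∃ c ≠ 0, ∀ x ∈ t, p x * u x = c := by
  have hu' : DifferentiableOn ℝ u t := fun x hx =>
    (hu.differentiableAt x (hts hx)).differentiableWithinAt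
  obtain ⟨c, hc⟩ := ht.exists_is_const_of_deriv_eq_zero htc (hp.mul hu') hpu
  refine ⟨c, ?_, hc⟩
  rintro rfl
  obtain ⟨m, hm, hpm⟩ := hpne
  have hpm_near : ∀ᶠ x in 𝓝 m, p x ≠ 0 :=
    (hp.continuousOn.continuousAt (ht.mem_nhds hm)).eventually_ne hpm
  have hum : u =ᶠ[𝓝 m] 0 := by
    filter_upwards [hpm_near, ht.mem_nhds hm] with x hpx hx
    exact (mul_eq_zero.1 (hc x hx)).resolve_left hpx
  obtain ⟨x, hx, hux⟩ := hune
  exact hux (hu.eqOn_zero_of_eventuallyEq_zero hγ hγne hγ₀ (hts hm) hum hx)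

end IsSLSolutionOn

end SturmLiouville

theorem stmt12_general {γ γ₀ : ℝ → ℝ} {s : Set ℝ} [s.OrdConnected]
    (hγ : ContinuousOn γ s) (hγne : ∀ x ∈ s, γ x ≠ 0) (hγ₀ : ContinuousOn γ₀ s)
    {t : Set ℝ} (ht : IsOpen t) (htc : IsPreconnected t) (hts : t ⊆ s)
    {p : ℝ → ℝ} (hp : DifferentiableOn ℝ p t) (hpne : ∃ x ∈ t, p x ≠ 0)
    {lam₀ lam₁ : ℝ} {u₀ u₁ : ℝ → ℝ}
    (hu₀ : IsSLSolutionOn γ γ₀ lam₀ u₀ s) (hu₁ : IsSLSolutionOn γ γ₀ lam₁ u₁ s)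
    (hu₀ne : ∃ x ∈ s, u₀ x ≠ 0) (hu₁ne : ∃ x ∈ s, u₁ x ≠ 0)
    (h₀ : ∀ x ∈ t, deriv (fun y => p y * u₀ y) x = 0)
    (h₁ : ∀ x ∈ t, deriv (fun y => p y * u₁ y) x = 0) :
    lam₀ = lam₁ := by
  obtain ⟨c₀, hc₀, hpu₀⟩ :=
    hu₀.exists_ne_zero_mul_eq_const hγ hγne hγ₀ hu₀ne ht htc hts hp hpne h₀
  obtain ⟨c₁, hc₁, hpu₁⟩ :=
    hu₁.exists_ne_zero_mul_eq_const hγ hγne hγ₀ hu₁ne ht htc hts hp hpne h₁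
  obtain ⟨m, hm, -⟩ := hpne
  have hprop : u₁ =ᶠ[𝓝 m] fun x => c₁ / c₀ * u₀ x := by
    filter_upwards [ht.mem_nhds hm] with x hx
    have hpx : p x ≠ 0 := left_ne_zero_of_mul (hpu₀ x hx ▸ hc₀)
    refine mul_left_cancel₀ hpx ?_
    rw [mul_left_comm, hpu₀ x hx, hpu₁ x hx, div_mul_cancel₀ c₁ hc₀]
  have hu₁m : u₁ m ≠ 0 := right_ne_zero_of_mul (hpu₁ m hm ▸ hc₁)
  exact eigenvalue_eq_of_eventuallyEq_const_mul hprop hu₁m (hu₀.SL_eq m (hts hm))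
    (hu₁.SL_eq m (hts hm))

theorem stmt12 (γ γ₀ : ℝ → ℝ)
    (hγ : ContDiff ℝ 1 γ) (hγpos : ∀ x ∈ Set.Icc (0:ℝ) Real.pi, 0 < γ x)
    (hγ₀ : ContinuousOn γ₀ (Set.Icc 0 Real.pi))
    (a b : ℝ) (ha : 0 < a) (hab : a < b) (hb : b < Real.pi)
    (p : ℝ → ℝ) (hp : ContDiff ℝ 1 p) (hpne : ∀ x ∈ Set.Icc a b, p x ≠ 0)
    (lam₀ lam₁ : ℝ) (φ₀ φ₁ : ℝ → ℝ)
    (hφ₀ : IsDirichletEF γ γ₀ lam₀ φ₀) (hφ₁ : IsDirichletEF γ γ₀ lam₁ φ₁)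
    (h₀ : ∀ x ∈ Set.Ioo a b, deriv (fun y => p y * φ₀ y) x = 0)
    (h₁ : ∀ x ∈ Set.Ioo a b, deriv (fun y => p y * φ₁ y) x = 0) :
    lam₀ = lam₁ := by
  exact stmt12_general hγ.continuous.continuousOn (fun x hx => (hγpos x hx).ne') hγ₀ isOpen_Ioo
    isPreconnected_Ioo (Ioo_subset_Icc_self.trans (Icc_subset_Icc ha.le hb.le))
    (hp.differentiable one_ne_zero).differentiableOn
    ((nonempty_Ioo.2 hab).imp fun x hx => ⟨hx, hpne x (Ioo_subset_Icc_self hx)⟩)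
    (hφ₀.isSLSolutionOn (hγ.differentiable one_ne_zero))
    (hφ₁.isSLSolutionOn (hγ.differentiable one_ne_zero)) hφ₀.2.1 hφ₁.2.1 h₀ h₁
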